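/- arXiv:2303.10631 — 4 statements merged into one kernel-verified Lean document; each statement's English description precedes it below -/
import Mathlib

section
/- Let m ∈ ℕ. The following are equivalent: (i) for every alphabet Σ and every bideterministic weighted automaton A over the ring ℤ/mℤ and Σ, there exists a bideterministic weighted automaton B over ℤ/mℤ with ‖B‖ = ‖A‖ such that B is minimal; (ii) either m = 0, or m = p^k for some prime p and some k ∈ ℕ. -/
/-- A weighted automaton over a semiring `S` and alphabet `α`:
a finite type of states `Q`, a transition weighting `σ`, an initial
weighting `ι` and a terminal weighting `τ`. -/
structure WeightedAutomaton (S : Type) [Semiring S] (α : Type) : Type 1 where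
  Q : Type
  [fintypeQ : Fintype Q]
  σ : Q → α → Q → S
  ι : Q → S
  τ : Q → S

namespace WeightedAutomaton

attribute [instance] fintypeQ

variable {S : Type} [Semiring S] {α : Type}

/-- The "future" of a state on a word: the sum, over all runs from this state
upon the word, of the product of the transition weights times the terminal
weight of the last state.  (Sequences of states using a zero-weight transition
contribute zero, so this is exactly the sum over runs.) -/
def future (A : WeightedAutomaton S α) : List α → A.Q → S
  | [], q => A.τ q
  | c :: w, q => ∑ p : A.Q, A.σ q c p * A.future w p

/-- The behaviour of a weighted automaton: the series sending each word `w`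
to the sum of the monomial weights `ι(q₀)·σ(q₀,c₁,q₁)⋯σ(q_{n−1},cₙ,qₙ)·τ(qₙ)`
of all runs of the automaton upon `w`. -/
def behaviour (A : WeightedAutomaton S α) (w : List α) : S :=
  ∑ q : A.Q, A.ι q * A.future w q

/-- A weighted automaton is bideterministic if at most one state has nonzero
initial weight, at most one state has nonzero terminal weight, and for every
letter each state has at most one outgoing and at most one incoming transition
with nonzero weight upon that letter. -/
def Bideterministic (A : WeightedAutomaton S α) : Prop :=
  (∀ p q, A.ι p ≠ 0 → A.ι q ≠ 0 → p = q) ∧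
  (∀ p q, A.τ p ≠ 0 → A.τ q ≠ 0 → p = q) ∧
  (∀ p c q q', A.σ p c q ≠ 0 → A.σ p c q' ≠ 0 → q = q') ∧
  (∀ p p' c q, A.σ p c q ≠ 0 → A.σ p' c q ≠ 0 → p = p')

/-- `A.IsPath q l` : starting in state `q`, the list `l` of (letter, next state)
pairs follows transitions all of which have nonzero weight, i.e. it is a run. -/
def IsPath (A : WeightedAutomaton S α) : A.Q → List (α × A.Q) → Prop
  | _, [] => True
  | q, (c, q') :: l => A.σ q c q' ≠ 0 ∧ A.IsPath q' l

/-- The last state of a path. -/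
def pathEnd (A : WeightedAutomaton S α) : A.Q → List (α × A.Q) → A.Q
  | q, [] => q
  | _, (_, q') :: l => A.pathEnd q' l

/-- The product of the transition weights along a path. -/
def pathWeight (A : WeightedAutomaton S α) : A.Q → List (α × A.Q) → S
  | _, [] => 1
  | q, (c, q') :: l => A.σ q c q' * A.pathWeight q' l

/-- A state is accessible if some run from a state with nonzero initial weight
ends in it. -/
def Accessible (A : WeightedAutomaton S α) (q : A.Q) : Prop :=
  ∃ p l, A.ι p ≠ 0 ∧ A.IsPath p l ∧ A.pathEnd p l = q

/-- A state is coaccessible if some run from it ends in a state with nonzero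
terminal weight. -/
def Coaccessible (A : WeightedAutomaton S α) (q : A.Q) : Prop :=
  ∃ l, A.IsPath q l ∧ A.τ (A.pathEnd q l) ≠ 0

/-- A weighted automaton is trim if all its states are accessible and
coaccessible. -/
def Trim (A : WeightedAutomaton S α) : Prop :=
  ∀ q, A.Accessible q ∧ A.Coaccessible q

/-- A weighted automaton is semantically trim if every state lies on some run
whose monomial weight is nonzero. -/
def SemanticallyTrim (A : WeightedAutomaton S α) : Prop :=
  ∀ q, ∃ p l, A.IsPath p l ∧ (q = p ∨ q ∈ l.map Prod.snd) ∧
    A.ι p * A.pathWeight p l * A.τ (A.pathEnd p l) ≠ 0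

/-- The number of states of a weighted automaton. -/
def states (A : WeightedAutomaton S α) : ℕ := Fintype.card A.Q

/-- A weighted automaton is minimal if every weighted automaton over the same
semiring and alphabet with the same behaviour has at least as many states. -/
def Minimal (A : WeightedAutomaton S α) : Prop :=
  ∀ B : WeightedAutomaton S α, B.behaviour = A.behaviour → A.states ≤ B.states

end WeightedAutomaton

open WeightedAutomaton Finset

namespace WAProof

section general
variable {S : Type} [CommRing S] {α : Type}

/-- total weight of the runs on a reversed word from the initial states to a given state -/
def past (A : WeightedAutomaton S α) : List α → A.Q → S
  | [], q => A.ι q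
  | c :: u, q => ∑ p : A.Q, past A u p * A.σ p c q

theorem behaviour_split (A : WeightedAutomaton S α) (u : List α) :
    ∀ v : List α, A.behaviour (u.reverse ++ v) = ∑ q, past A u q * A.future v q := by
  induction u with
  | nil => intro v; simp [past, behaviour]
  | cons c u ih =>
    intro v
    have h := ih (c :: v)
    simp only [List.reverse_cons, List.append_assoc, List.singleton_append]
    rw [h]
    simp only [future, past, Finset.mul_sum, Finset.sum_mul]
    rw [Finset.sum_comm]
    refine Finset.sum_congr rfl fun p _ => Finset.sum_congr rfl fun q _ => ?_
    ring

theorem past_unique (A : WeightedAutomaton S α) (hA : A.Bideterministic) (u : List α) :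
    ∀ p q, past A u p ≠ 0 → past A u q ≠ 0 → p = q := by
  induction u with
  | nil => exact hA.1
  | cons c u ih =>
    intro p q hp hq
    obtain ⟨p', -, hp'⟩ := Finset.exists_ne_zero_of_sum_ne_zero hp
    obtain ⟨q', -, hq'⟩ := Finset.exists_ne_zero_of_sum_ne_zero hq
    have : p' = q' := ih _ _ (left_ne_zero_of_mul hp') (left_ne_zero_of_mul hq')
    subst this
    exact hA.2.2.1 _ _ _ _ (right_ne_zero_of_mul hp') (right_ne_zero_of_mul hq')

theorem future_unique (A : WeightedAutomaton S α) (hA : A.Bideterministic) (u : List α) :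
    ∀ p q, A.future u p ≠ 0 → A.future u q ≠ 0 → p = q := by
  induction u with
  | nil => exact hA.2.1
  | cons c u ih =>
    intro p q hp hq
    obtain ⟨p', -, hp'⟩ := Finset.exists_ne_zero_of_sum_ne_zero hp
    obtain ⟨q', -, hq'⟩ := Finset.exists_ne_zero_of_sum_ne_zero hq
    have : p' = q' := ih _ _ (right_ne_zero_of_mul hp') (right_ne_zero_of_mul hq')
    subst this
    exact hA.2.2.2 _ _ _ _ (left_ne_zero_of_mul hp') (left_ne_zero_of_mul hq')

/-- useful states -/
def Useful (A : WeightedAutomaton S α) (q : A.Q) : Prop :=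
  ∃ u v, past A u q * A.future v q ≠ 0

open Classical in
/-- restriction to the useful states -/
noncomputable def trimmed (A : WeightedAutomaton S α) : WeightedAutomaton S α where
  Q := {q : A.Q // Useful A q}
  σ := fun p c q => A.σ p.1 c q.1
  ι := fun p => A.ι p.1
  τ := fun p => A.τ p.1

theorem trimmed_bidet (A : WeightedAutomaton S α) (hA : A.Bideterministic) :
    (trimmed A).Bideterministic := by
  refine ⟨fun p q h1 h2 => Subtype.ext (hA.1 _ _ h1 h2),
    fun p q h1 h2 => Subtype.ext (hA.2.1 _ _ h1 h2),
    fun p c q q' h1 h2 => Subtype.ext (hA.2.2.1 _ _ _ _ h1 h2),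
    fun p p' c q h1 h2 => Subtype.ext (hA.2.2.2 _ _ _ _ h1 h2)⟩

open Classical in
theorem sum_useful (A : WeightedAutomaton S α) (f : A.Q → S) (g : (trimmed A).Q → S)
    (h0 : ∀ q, ¬ Useful A q → f q = 0) (h1 : ∀ q : (trimmed A).Q, f q.1 = g q) :
    ∑ q, f q = ∑ q, g q := by
  have h2 : ∑ q, f q = ∑ q ∈ univ.filter (Useful A), f q := by
    rw [Finset.sum_filter]
    refine Finset.sum_congr rfl fun q _ => ?_
    split_ifs with h
    · rfl
    · exact h0 q h
  rw [h2, ← Finset.sum_congr rfl (fun q _ => h1 q)]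
  exact Finset.sum_subtype _ (by simp) f

theorem trimmed_future (A : WeightedAutomaton S α) (hA : A.Bideterministic) (w : List α) :
    ∀ (u : List α) (q : (trimmed A).Q),
      past A u q.1 * A.future w q.1 = past A u q.1 * (trimmed A).future w q := by
  induction w with
  | nil => intro u q; rfl
  | cons c w ih =>
    intro u q
    have key : ∀ p, A.σ q.1 c p ≠ 0 → past A u q.1 * A.σ q.1 c p = past A (c :: u) p := by
      intro p hp
      symm
      apply Finset.sum_eq_single_of_mem _ (Finset.mem_univ _)
      intro b _ hb
      by_contra hne
      exact hb (hA.2.2.2 _ _ _ _ (right_ne_zero_of_mul hne) hp)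
    simp only [future, Finset.mul_sum]
    apply sum_useful
    · intro p hp
      by_cases h : A.σ q.1 c p = 0
      · simp [h]
      · rw [← mul_assoc, key p h]
        by_contra hne
        exact hp ⟨_, _, hne⟩
    · intro p
      change _ = past A u q.1 * (A.σ q.1 c p.1 * _)
      by_cases h : A.σ q.1 c p.1 = 0
      · simp [h]
      · rw [← mul_assoc, ← mul_assoc, key p.1 h]
        exact ih _ _

theorem trimmed_behaviour (A : WeightedAutomaton S α) (hA : A.Bideterministic) :
    (trimmed A).behaviour = A.behaviour := by
  funext w
  symm
  apply sum_useful
  · intro q hq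
    by_contra hne
    exact hq ⟨[], w, hne⟩
  · intro q
    exact trimmed_future A hA w [] q

/-- diagonal matrices with nonzero entries do not factor through smaller dimension -/
def DiagRank (S : Type) [CommRing S] : Prop :=
  ∀ (n r : Type) [Fintype n] [Fintype r] (L : n → r → S) (R : r → n → S),
    (∀ i j, i ≠ j → ∑ k, L i k * R k j = 0) → (∀ i, ∑ k, L i k * R k i ≠ 0) →
    Fintype.card n ≤ Fintype.card r

theorem trimmed_minimal (hS : DiagRank S) (A : WeightedAutomaton S α)
    (hA : A.Bideterministic) : (trimmed A).Minimal := by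
  intro C hC
  rw [trimmed_behaviour A hA] at hC
  have hu : ∀ q : (trimmed A).Q, ∃ u v, past A u q.1 * A.future v q.1 ≠ 0 := fun q => q.2
  choose u v huv using hu
  have hsum : ∀ i j, ∑ k, past C (u i) k * C.future (v j) k =
      ∑ k, past A (u i) k * A.future (v j) k := by
    intro i j
    rw [← behaviour_split, ← behaviour_split, hC]
  refine hS _ _ (fun i k => past C (u i) k) (fun k j => C.future (v j) k) ?_ ?_
  · intro i j hij
    rw [hsum]
    refine Finset.sum_eq_zero fun k _ => ?_
    by_contra hne
    apply hij
    apply Subtype.ext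
    rw [past_unique A hA (u i) i.1 k (left_ne_zero_of_mul (huv i)) (left_ne_zero_of_mul hne)]
    exact (future_unique A hA (v j) j.1 k (right_ne_zero_of_mul (huv j))
      (right_ne_zero_of_mul hne)).symm
  · intro i
    rw [hsum, Finset.sum_eq_single_of_mem i.1 (Finset.mem_univ _)]
    · exact huv i
    · intro k _ hk
      by_contra hne
      exact hk (past_unique A hA (u i) _ _ (left_ne_zero_of_mul hne)
        (left_ne_zero_of_mul (huv i)))

end general

theorem det_mul_zero {n r : Type} [Fintype n] [Fintype r] [DecidableEq n]
    (L : n → r → ℤ) (R : r → n → ℤ) (h : Fintype.card r < Fintype.card n) :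
    (Matrix.of fun i j => ∑ k, L i k * R k j).det = 0 := by
  obtain ⟨v, hv0, hv⟩ : ∃ v : n → ℤ, (Matrix.of R).mulVec v = 0 ∧ v ≠ 0 := by
    have hk : LinearMap.ker (Matrix.of R).mulVecLin ≠ ⊥ := by
      intro hbot
      have hle := LinearMap.finrank_le_finrank_of_injective (LinearMap.ker_eq_bot.mp hbot)
      simp only [Module.finrank_fintype_fun_eq_card] at hle
      omega
    obtain ⟨v, hv, hv'⟩ := Submodule.exists_mem_ne_zero_of_ne_bot hk
    exact ⟨v, by simpa using hv, hv'⟩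
  rw [← Matrix.exists_mulVec_eq_zero_iff]
  refine ⟨v, hv, ?_⟩
  have : (Matrix.of fun i j => ∑ k, L i k * R k j) = Matrix.of L * Matrix.of R := by
    ext i j; simp [Matrix.mul_apply]
  rw [this, ← Matrix.mulVec_mulVec, hv0, Matrix.mulVec_zero]

theorem diagRank_int : DiagRank ℤ := by
  classical
  intro n r _ _ L R h0 h1
  by_contra hlt
  have hdet := det_mul_zero (n := n) (r := r) L R (not_le.mp hlt)
  have : (Matrix.of fun i j => ∑ k, (L i k : ℤ) * R k j) =
      Matrix.diagonal fun i => ∑ k, (L i k : ℤ) * R k i := by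
    ext i j
    by_cases hij : i = j
    · subst hij; simp
    · rw [Matrix.diagonal_apply_ne _ hij]; exact h0 i j hij
  rw [this, Matrix.det_diagonal, Finset.prod_eq_zero_iff] at hdet
  obtain ⟨i, _, hi⟩ := hdet
  exact h1 i hi

theorem diagRank_zero : DiagRank (ZMod 0) := diagRank_int

theorem diagRank_pow (p k : ℕ) (hp : p.Prime) : DiagRank (ZMod (p ^ k)) := by
  classical
  have := Fact.mk hp
  intro n r _ _ L R h0 h1
  by_contra hlt
  let L' : n → r → ℤ := fun i k => (L i k).cast
  let R' : r → n → ℤ := fun i k => (R i k).cast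
  have hdet := det_mul_zero L' R' (not_le.mp hlt)
  have hc : ∀ i j, (((∑ k, L' i k * R' k j : ℤ)) : ZMod (p ^ k)) = ∑ k, L i k * R k j := by
    intro i j
    simp [L', R']
  have hoff : ∀ i j, i ≠ j → ((p : ℤ) ^ k) ∣ ∑ k, L' i k * R' k j := by
    intro i j hij
    have := (hc i j).trans (h0 i j hij)
    rw [ZMod.intCast_zmod_eq_zero_iff_dvd] at this
    exact_mod_cast this
  have hdiag : ∀ i, ¬ ((p : ℤ) ^ k) ∣ ∑ k, L' i k * R' k i := by
    intro i hd
    apply h1 i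
    rw [← hc, ZMod.intCast_zmod_eq_zero_iff_dvd]
    exact_mod_cast hd
  have hfac : ∀ i, ∃ e < k, ∃ c : ℤ, ∑ k, L' i k * R' k i = p ^ e * c ∧ ¬ (p : ℤ) ∣ c := by
    intro i
    have hne : ∑ k, L' i k * R' k i ≠ 0 := by
      intro h; apply hdiag i; rw [h]; exact dvd_zero _
    have hfin : FiniteMultiplicity (p : ℤ) (∑ k, L' i k * R' k i) :=
      Int.finiteMultiplicity_iff.mpr ⟨by simpa using hp.one_lt.ne', hne⟩
    obtain ⟨c, hc1, hc2⟩ := hfin.exists_eq_pow_mul_and_not_dvd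
    refine ⟨_, ?_, c, hc1, hc2⟩
    by_contra hge
    apply hdiag i
    rw [hc1]
    exact Dvd.dvd.mul_right (pow_dvd_pow _ (not_lt.mp hge)) _
  choose e he c hc1 hc2 using hfac
  have hN : ∀ i j, ∃ d : ℤ, ∑ k, L' i k * R' k j = p ^ e i * d ∧
      ((d : ℤ) : ZMod p) = if i = j then (c i : ZMod p) else 0 := by
    intro i j
    by_cases hij : i = j
    · subst hij
      exact ⟨c i, hc1 i, by simp⟩
    · have h2 : (p : ℤ) ^ (e i) * p ∣ ∑ k, L' i k * R' k j := by
        rw [← pow_succ]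
        exact (pow_dvd_pow _ (he i)).trans (hoff i j hij)
      obtain ⟨d, hd⟩ := h2
      exact ⟨p * d, by rw [hd]; ring, by simp [hij]⟩
  choose N hN1 hN2 using hN
  have hM : (Matrix.of fun i j => ∑ k, L' i k * R' k j) =
      Matrix.of fun i j => ((p : ℤ) ^ e i) * (Matrix.of N) i j := by
    ext i j; simp [hN1]
  rw [hM, Matrix.det_mul_column, mul_eq_zero, Finset.prod_eq_zero_iff] at hdet
  rcases hdet with ⟨i, _, hi⟩ | hdet
  · exact pow_ne_zero _ (by exact_mod_cast hp.ne_zero) hi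
  · have h3 := congrArg (Int.castRingHom (ZMod p)) hdet
    rw [RingHom.map_det, map_zero] at h3
    have h4 : (Int.castRingHom (ZMod p)).mapMatrix (Matrix.of N) =
        Matrix.diagonal fun i => (c i : ZMod p) := by
      ext i j
      simp [hN2, Matrix.diagonal_apply]
    rw [h4, Matrix.det_diagonal, Finset.prod_eq_zero_iff] at h3
    obtain ⟨i, _, hi⟩ := h3
    rw [ZMod.intCast_zmod_eq_zero_iff_dvd] at hi
    exact hc2 i hi

section counterexample
variable {S : Type} [CommRing S]

/-- the three state bideterministic automaton -/
def autA (x y : S) : WeightedAutomaton S Bool where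
  Q := Fin 3
  σ := fun p c q => bif c then !![0, x, 0; x, 0, 0; 0, 0, y] p q
    else !![0, 0, y; 0, 0, 0; y, 0, 0] p q
  ι := ![1, 0, 0]
  τ := ![1, 0, 0]

/-- the two state equivalent automaton -/
def autC (x y : S) : WeightedAutomaton S Bool where
  Q := Fin 2
  σ := fun p c q => bif c then !![0, x; x, y] p q else !![0, y; y, 0] p q
  ι := ![1, 0]
  τ := ![1, 0]

theorem autA_bidet (x y : S) : (autA x y).Bideterministic := by
  refine ⟨?_, ?_, ?_, ?_⟩
  · change ∀ p q : Fin 3, (![1, 0, 0] : Fin 3 → S) p ≠ 0 →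
      (![1, 0, 0] : Fin 3 → S) q ≠ 0 → p = q
    intro p q; fin_cases p <;> fin_cases q <;> simp
  · change ∀ p q : Fin 3, (![1, 0, 0] : Fin 3 → S) p ≠ 0 →
      (![1, 0, 0] : Fin 3 → S) q ≠ 0 → p = q
    intro p q; fin_cases p <;> fin_cases q <;> simp
  · intro (p : Fin 3) c (q : Fin 3) (q' : Fin 3)
    fin_cases p <;> fin_cases q <;> fin_cases q' <;> cases c <;> simp [autA]
  · intro (p : Fin 3) (p' : Fin 3) c (q : Fin 3)
    fin_cases p <;> fin_cases q <;> fin_cases p' <;> cases c <;> simp [autA]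

theorem A_nil (x y : S) (q : Fin 3) :
    (autA x y).future [] q = (![1, 0, 0] : Fin 3 → S) q := rfl

theorem C_nil (x y : S) (q : Fin 2) :
    (autC x y).future [] q = (![1, 0] : Fin 2 → S) q := rfl

theorem A_cons (x y : S) (c : Bool) (w : List Bool) (q : Fin 3) :
    (autA x y).future (c :: w) q = ∑ p : Fin 3,
      (bif c then !![0, x, 0; x, 0, 0; 0, 0, y] q p
        else !![0, 0, y; 0, 0, 0; y, 0, 0] q p) * (autA x y).future w p := rfl

theorem C_cons (x y : S) (c : Bool) (w : List Bool) (q : Fin 2) :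
    (autC x y).future (c :: w) q = ∑ p : Fin 2,
      (bif c then !![0, x; x, y] q p else !![0, y; y, 0] q p) * (autC x y).future w p := rfl

theorem A_beh (x y : S) (w : List Bool) :
    (autA x y).behaviour w = (autA x y).future w (0 : Fin 3) := by
  change ∑ q : Fin 3, (![1, 0, 0] : Fin 3 → S) q * (autA x y).future w q = _
  simp [Fin.sum_univ_succ]

theorem C_beh (x y : S) (w : List Bool) :
    (autC x y).behaviour w = (autC x y).future w (0 : Fin 2) := by
  change ∑ q : Fin 2, (![1, 0] : Fin 2 → S) q * (autC x y).future w q = _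
  simp [Fin.sum_univ_succ]

theorem AC_future (x y : S) (hx : x * x = x) (hy : y * y = y) (hxy : x * y = 0)
    (w : List Bool) :
    (autC x y).future w (0 : Fin 2) = (autA x y).future w (0 : Fin 3) ∧
    (autC x y).future w (1 : Fin 2) = x * (autA x y).future w (1 : Fin 3) +
      y * (autA x y).future w (2 : Fin 3) := by
  induction w with
  | nil => simp [A_nil, C_nil]
  | cons c w ih =>
    obtain ⟨h0, h1⟩ := ih
    cases c
    · simp [A_cons, C_cons, Fin.sum_univ_three, Fin.sum_univ_two, h0, h1]
      constructor
      · linear_combination (autA x y).future w (1 : Fin 3) * hxy +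
          (autA x y).future w (2 : Fin 3) * hy
      · linear_combination - (autA x y).future w (0 : Fin 3) * hy
    · simp [A_cons, C_cons, Fin.sum_univ_three, Fin.sum_univ_two, h0, h1]
      constructor
      · linear_combination (autA x y).future w (1 : Fin 3) * hx +
          (autA x y).future w (2 : Fin 3) * hxy
      · linear_combination - (autA x y).future w (0 : Fin 3) * hx +
          (autA x y).future w (1 : Fin 3) * hxy

theorem no_min (x y : S) (hx : x * x = x) (hy : y * y = y) (hxy : x * y = 0)
    (hx0 : x ≠ 0) (hy0 : y ≠ 0) (B : WeightedAutomaton S Bool)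
    (hB : B.behaviour = (autA x y).behaviour) (hbi : B.Bideterministic) (hmin : B.Minimal) :
    False := by
  have hone : (1 : S) ≠ 0 := by
    intro h
    exact hx0 (by rw [← mul_one x, h, mul_zero])
  have hcard : Fintype.card B.Q ≤ 2 := by
    refine hmin (autC x y) ?_
    funext w
    rw [hB, A_beh, C_beh, (AC_future x y hx hy hxy w).1]
  have hval : ∀ w, B.behaviour w = (autA x y).future w (0 : Fin 3) := by
    intro w; rw [hB, A_beh]
  have e0 : B.behaviour [] = 1 := by simp [hval, A_nil]
  have e1 : B.behaviour [true] = 0 := by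
    simp [hval, A_nil, A_cons, Fin.sum_univ_three]
  have e2 : B.behaviour [false] = 0 := by
    simp [hval, A_nil, A_cons, Fin.sum_univ_three]
  have e3 : B.behaviour [true, true] = x := by
    simp [hval, A_nil, A_cons, Fin.sum_univ_three, hx]
  have e4 : B.behaviour [false, false] = y := by
    simp [hval, A_nil, A_cons, Fin.sum_univ_three, hy]
  have e5 : B.behaviour [false, true, false] = y := by
    simp [hval, A_nil, A_cons, Fin.sum_univ_three, hy]
  have hz : ∃ z, B.ι z * B.τ z ≠ 0 := by
    have : B.behaviour [] ≠ 0 := by rw [e0]; exact hone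
    obtain ⟨z, -, h⟩ := Finset.exists_ne_zero_of_sum_ne_zero this
    exact ⟨z, h⟩
  obtain ⟨z, hz⟩ := hz
  have hι : ∀ q, q ≠ z → B.ι q = 0 := by
    intro q hq; by_contra h
    exact hq (hbi.1 _ _ h (left_ne_zero_of_mul hz))
  have hτ : ∀ q, q ≠ z → B.τ q = 0 := by
    intro q hq; by_contra h
    exact hq (hbi.2.1 _ _ h (right_ne_zero_of_mul hz))
  have hb : ∀ w, B.behaviour w = B.ι z * B.future w z := by
    intro w
    apply Finset.sum_eq_single_of_mem _ (Finset.mem_univ _)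
    intro q _ hq; rw [hι q hq, zero_mul]
  have hone' : B.ι z * B.τ z = 1 := by rw [← e0, hb]; rfl
  have hs : ∀ c q, B.future [c] q = B.σ q c z * B.τ z := by
    intro c q
    apply Finset.sum_eq_single_of_mem _ (Finset.mem_univ _)
    intro p _ hp; change _ * B.τ p = 0; rw [hτ p hp, mul_zero]
  have loop : ∀ c, B.behaviour [c] = 0 → B.σ z c z = 0 := by
    intro c hc
    rw [hb, hs] at hc
    linear_combination hc - B.σ z c z * hone'
  have la := loop _ e1
  have lb := loop _ e2
  have two : ∀ c, B.behaviour [c, c] ≠ 0 → ∃ s, B.σ z c s ≠ 0 ∧ B.σ s c z ≠ 0 := by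
    intro c hc
    rw [hb] at hc
    obtain ⟨s, -, h⟩ := Finset.exists_ne_zero_of_sum_ne_zero (right_ne_zero_of_mul hc)
    rw [hs] at h
    exact ⟨s, left_ne_zero_of_mul h, left_ne_zero_of_mul (right_ne_zero_of_mul h)⟩
  obtain ⟨s, hs1, hs2⟩ := two true (by rw [e3]; exact hx0)
  obtain ⟨t, ht1, ht2⟩ := two false (by rw [e4]; exact hy0)
  have hsz : s ≠ z := by rintro rfl; exact hs1 la
  have htz : t ≠ z := by rintro rfl; exact ht1 lb
  have hts : t = s := by
    classical
    by_contra hne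
    have h3 : ({z, s, t} : Finset B.Q).card = 3 :=
      Finset.card_eq_three.mpr ⟨z, s, t, hsz.symm, htz.symm, Ne.symm hne, rfl⟩
    have := Finset.card_le_univ ({z, s, t} : Finset B.Q)
    omega
  subst hts
  have h5 : B.behaviour [false, true, false] ≠ 0 := by rw [e5]; exact hy0
  rw [hb] at h5
  obtain ⟨p, -, h⟩ := Finset.exists_ne_zero_of_sum_ne_zero (right_ne_zero_of_mul h5)
  have hp : p = t := hbi.2.2.1 _ _ _ _ (left_ne_zero_of_mul h) ht1
  subst hp
  obtain ⟨r, -, h'⟩ := Finset.exists_ne_zero_of_sum_ne_zero (right_ne_zero_of_mul h)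
  have hr : r = z := hbi.2.2.1 _ _ _ _ (left_ne_zero_of_mul h') hs2
  subst hr
  rw [hs, lb] at h'
  simp at h'

end counterexample

theorem exists_idem (m : ℕ) (hm : m ≠ 0) (h : ¬ ∃ p k : ℕ, p.Prime ∧ m = p ^ k) :
    ∃ x y : ZMod m, x * x = x ∧ y * y = y ∧ x * y = 0 ∧ x ≠ 0 ∧ y ≠ 0 := by
  have hm1 : m ≠ 1 := by
    rintro rfl; exact h ⟨2, 0, Nat.prime_two, rfl⟩
  obtain ⟨p, hp, hpm⟩ := Nat.exists_prime_and_dvd hm1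
  obtain ⟨e, b, hb, hab⟩ := Nat.exists_eq_pow_mul_and_not_dvd hm p hp.ne_one
  have hb1 : b ≠ 1 := by
    rintro rfl; exact h ⟨p, e, hp, by simpa using hab⟩
  have he : e ≠ 0 := by
    rintro rfl; apply hb; simpa [hab] using hpm
  have ha1 : p ^ e ≠ 1 := by simp [hp.ne_one, he]
  have hcop : Nat.Coprime (p ^ e) b := Nat.Coprime.pow_left _ ((Nat.Prime.coprime_iff_not_dvd hp).2 hb)
  generalize p ^ e = a at *
  have ha0 : a ≠ 0 := by rintro rfl; simp [hab] at hm
  have hb0 : b ≠ 0 := by rintro rfl; simp [hab] at hm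
  obtain ⟨u, v, huv⟩ := Nat.isCoprime_iff_coprime.mpr hcop
  have huv' : (u : ZMod m) * a + v * b = 1 := by exact_mod_cast congrArg (Int.cast : ℤ → ZMod m) huv
  have h0 : (a : ZMod m) * b = 0 := by
    rw [← Nat.cast_mul, ← hab]; exact ZMod.natCast_self m
  have ha : (a : ZMod m) ≠ 0 := by
    intro hh
    rw [ZMod.natCast_eq_zero_iff, hab] at hh
    have := Nat.le_of_dvd (Nat.pos_of_ne_zero ha0) hh
    have h2 : 2 ≤ b := by omega
    have : 0 < a := Nat.pos_of_ne_zero ha0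
    nlinarith
  have hb' : (b : ZMod m) ≠ 0 := by
    intro hh
    rw [ZMod.natCast_eq_zero_iff, hab] at hh
    have := Nat.le_of_dvd (Nat.pos_of_ne_zero hb0) hh
    have h2 : 2 ≤ a := by omega
    have : 0 < b := Nat.pos_of_ne_zero hb0
    nlinarith
  refine ⟨u * a, v * b, ?_, ?_, ?_, ?_, ?_⟩
  · linear_combination (u * a : ZMod m) * huv' - (u * v : ZMod m) * h0
  · linear_combination (v * b : ZMod m) * huv' - (u * v : ZMod m) * h0
  · linear_combination (u * v : ZMod m) * h0
  · intro hh
    apply ha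
    linear_combination (a : ZMod m) * hh - (a : ZMod m) * huv' + (v : ZMod m) * h0
  · intro hh
    apply hb'
    linear_combination (b : ZMod m) * hh - (b : ZMod m) * huv' + (u : ZMod m) * h0

end WAProof

/-- For `m : ℕ`, every bideterministic weighted automaton over `ZMod m` admits
an equivalent minimal automaton that is bideterministic if and only if `m = 0`
or `m` is a prime power `p^k` with `k ∈ ℕ`. -/
theorem bideterministic_minimal_equivalent_zmod_iff
    (m : ℕ) :
    (∀ (α : Type) (_ : Fintype α) (_ : Nonempty α)
        (A : WeightedAutomaton (ZMod m) α), A.Bideterministic →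
        ∃ B : WeightedAutomaton (ZMod m) α,
          B.behaviour = A.behaviour ∧ B.Bideterministic ∧ B.Minimal) ↔
      (m = 0 ∨ ∃ (p k : ℕ), p.Prime ∧ m = p ^ k) := by
  constructor
  · intro h
    by_cases hm : m = 0
    · exact Or.inl hm
    · right
      by_contra hpk
      obtain ⟨x, y, hx, hy, hxy, hx0, hy0⟩ := WAProof.exists_idem m hm hpk
      obtain ⟨B, hB, hbi, hmin⟩ := h Bool inferInstance inferInstance (WAProof.autA x y)
        (WAProof.autA_bidet x y)
      exact WAProof.no_min x y hx hy hxy hx0 hy0 B hB hbi hmin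
  · intro h α _ _ A hA
    have hS : WAProof.DiagRank (ZMod m) := by
      rcases h with rfl | ⟨p, k, hp, rfl⟩
      · exact WAProof.diagRank_zero
      · exact WAProof.diagRank_pow p k hp
    exact ⟨WAProof.trimmed A, WAProof.trimmed_behaviour A hA, WAProof.trimmed_bidet A hA,
      WAProof.trimmed_minimal hS A hA⟩
end

section
/- Let S be a positive semiring, i.e., a semiring that is both zero-sum free (a + b = 0 implies a = 0 and b = 0) and zero-divisor free (a·b = 0 implies a = 0 or b = 0). Then every trim bideterministic weighted automaton over S is minimal: every weighted automaton over S with the same behaviour has at least as many states. -/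
namespace WeightedAutomaton

/-- There is a run from `p` to `q` upon the word. -/
def Reach {S : Type} [Semiring S] {α : Type} (A : WeightedAutomaton S α) :
    A.Q → List α → A.Q → Prop
  | p, [], q => p = q
  | p, c :: w, q => ∃ r, A.σ p c r ≠ 0 ∧ Reach A r w q

theorem reach_append {S : Type} [Semiring S] {α : Type} (A : WeightedAutomaton S α)
    (u v : List α) (p q : A.Q) :
    A.Reach p (u ++ v) q ↔ ∃ r, A.Reach p u r ∧ A.Reach r v q := by
  induction u generalizing p with
  | nil => simp [Reach]
  | cons c u ih =>
    simp only [List.cons_append, Reach, ih]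
    constructor
    · rintro ⟨r, h, s, h1, h2⟩
      exact ⟨s, ⟨r, h, h1⟩, h2⟩
    · rintro ⟨s, ⟨r, h, h1⟩, h2⟩
      exact ⟨r, h, s, h1, h2⟩

theorem reach_of_isPath {S : Type} [Semiring S] {α : Type} (A : WeightedAutomaton S α)
    (l : List (α × A.Q)) (p : A.Q) (h : A.IsPath p l) :
    A.Reach p (l.map Prod.fst) (A.pathEnd p l) := by
  induction l generalizing p with
  | nil => simp [Reach, pathEnd]
  | cons x l ih =>
    obtain ⟨c, q⟩ := x
    exact ⟨q, h.1, ih q h.2⟩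

theorem reach_det {S : Type} [Semiring S] {α : Type} (A : WeightedAutomaton S α)
    (hb : A.Bideterministic) (w : List α) (p q q' : A.Q)
    (h : A.Reach p w q) (h' : A.Reach p w q') : q = q' := by
  induction w generalizing p with
  | nil => exact h.symm.trans h'
  | cons c w ih =>
    obtain ⟨r, h1, h2⟩ := h
    obtain ⟨r', h1', h2'⟩ := h'
    obtain rfl := hb.2.2.1 p c r r' h1 h1'
    exact ih r h2 h2'

theorem reach_codet {S : Type} [Semiring S] {α : Type} (A : WeightedAutomaton S α)
    (hb : A.Bideterministic) (w : List α) (p p' q : A.Q)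
    (h : A.Reach p w q) (h' : A.Reach p' w q) : p = p' := by
  induction w generalizing p p' with
  | nil => exact Eq.trans h h'.symm
  | cons c w ih =>
    obtain ⟨r, h1, h2⟩ := h
    obtain ⟨r', h1', h2'⟩ := h'
    obtain rfl := ih r r' h2 h2'
    exact hb.2.2.2 p p' c r h1 h1'

theorem sum_ne_zero_iff_of_positive {S : Type} [Semiring S]
    (hz : ∀ a b : S, a + b = 0 → a = 0 ∧ b = 0)
    {Q : Type} (s : Finset Q) (f : Q → S) :
    ∑ q ∈ s, f q ≠ 0 ↔ ∃ q ∈ s, f q ≠ 0 := by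
  classical
  constructor
  · exact Finset.exists_ne_zero_of_sum_ne_zero
  · rintro ⟨q, hq, h⟩ h0
    rw [← Finset.add_sum_erase s f hq] at h0
    exact h (hz _ _ h0).1

theorem mul_ne_zero_iff_of_positive {S : Type} [Semiring S]
    (hd : ∀ a b : S, a * b = 0 → a = 0 ∨ b = 0) (a b : S) :
    a * b ≠ 0 ↔ a ≠ 0 ∧ b ≠ 0 := by
  constructor
  · intro h
    exact ⟨fun h0 => h (by rw [h0, zero_mul]), fun h0 => h (by rw [h0, mul_zero])⟩
  · rintro ⟨h1, h2⟩ h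
    exact (hd a b h).elim h1 h2

theorem future_ne_zero_iff {S : Type} [Semiring S]
    (hz : ∀ a b : S, a + b = 0 → a = 0 ∧ b = 0)
    (hd : ∀ a b : S, a * b = 0 → a = 0 ∨ b = 0)
    {α : Type} (A : WeightedAutomaton S α) (w : List α) (p : A.Q) :
    A.future w p ≠ 0 ↔ ∃ q, A.Reach p w q ∧ A.τ q ≠ 0 := by
  induction w generalizing p with
  | nil => simp [future, Reach]
  | cons c w ih =>
    simp only [future, Reach, sum_ne_zero_iff_of_positive hz,
      mul_ne_zero_iff_of_positive hd, ih, Finset.mem_univ, true_and]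
    constructor
    · rintro ⟨r, h, s, h1, h2⟩
      exact ⟨s, ⟨r, h, h1⟩, h2⟩
    · rintro ⟨s, ⟨r, h, h1⟩, h2⟩
      exact ⟨r, h, s, h1, h2⟩

theorem behaviour_ne_zero_iff {S : Type} [Semiring S]
    (hz : ∀ a b : S, a + b = 0 → a = 0 ∧ b = 0)
    (hd : ∀ a b : S, a * b = 0 → a = 0 ∨ b = 0)
    {α : Type} (A : WeightedAutomaton S α) (w : List α) :
    A.behaviour w ≠ 0 ↔ ∃ p, A.ι p ≠ 0 ∧ ∃ q, A.Reach p w q ∧ A.τ q ≠ 0 := by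
  simp only [behaviour, sum_ne_zero_iff_of_positive hz,
    mul_ne_zero_iff_of_positive hd, future_ne_zero_iff hz hd, Finset.mem_univ, true_and]

end WeightedAutomaton

/-- Every trim bideterministic weighted automaton over a positive semiring
(i.e. a zero-sum free and zero-divisor free semiring) is minimal. -/
theorem trim_bideterministic_minimal_of_positive
    {S : Type} [Semiring S]
    (hzerosumfree : ∀ a b : S, a + b = 0 → a = 0 ∧ b = 0)
    (hzerodivfree : ∀ a b : S, a * b = 0 → a = 0 ∨ b = 0)
    {α : Type} [Fintype α] [Nonempty α]
    (A : WeightedAutomaton S α) (htrim : A.Trim) (hbidet : A.Bideterministic) :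
    A.Minimal := by
  intro B hB
  have hacc : ∀ q : A.Q, ∃ u p, A.ι p ≠ 0 ∧ A.Reach p u q := by
    intro q
    obtain ⟨p, l, h1, h2, h3⟩ := (htrim q).1
    exact ⟨l.map Prod.fst, p, h1, h3 ▸ A.reach_of_isPath l p h2⟩
  have hco : ∀ q : A.Q, ∃ v t, A.Reach q v t ∧ A.τ t ≠ 0 := by
    intro q
    obtain ⟨l, h1, h2⟩ := (htrim q).2
    exact ⟨l.map Prod.fst, _, A.reach_of_isPath l q h1, h2⟩
  choose u p hp hu using hacc
  choose v t hv ht using hco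
  have hmid : ∀ q : A.Q, ∃ m : B.Q, (∃ p', B.ι p' ≠ 0 ∧ B.Reach p' (u q) m) ∧
      ∃ t', B.Reach m (v q) t' ∧ B.τ t' ≠ 0 := by
    intro q
    have h : A.behaviour (u q ++ v q) ≠ 0 :=
      (A.behaviour_ne_zero_iff hzerosumfree hzerodivfree _).2
        ⟨p q, hp q, t q, (A.reach_append _ _ _ _).2 ⟨q, hu q, hv q⟩, ht q⟩
    rw [← hB] at h
    obtain ⟨p', hp', t', hr, ht'⟩ :=
      (B.behaviour_ne_zero_iff hzerosumfree hzerodivfree _).1 h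
    obtain ⟨m, h1, h2⟩ := (B.reach_append _ _ _ _).1 hr
    exact ⟨m, ⟨p', hp', h1⟩, t', h2, ht'⟩
  choose f hf1 hf2 using hmid
  refine Fintype.card_le_of_injective f ?_
  intro q q' hqq
  obtain ⟨p', hp', h1⟩ := hf1 q
  obtain ⟨t', h2, ht'⟩ := hf2 q'
  rw [← hqq] at h2
  have h : B.behaviour (u q ++ v q') ≠ 0 :=
    (B.behaviour_ne_zero_iff hzerosumfree hzerodivfree _).2
      ⟨p', hp', t', (B.reach_append _ _ _ _).2 ⟨f q, h1, h2⟩, ht'⟩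
  rw [hB] at h
  obtain ⟨a, ha, b, hr, hb⟩ :=
    (A.behaviour_ne_zero_iff hzerosumfree hzerodivfree _).1 h
  obtain ⟨m, h3, h4⟩ := (A.reach_append _ _ _ _).1 hr
  obtain rfl := hbidet.1 a (p q) ha (hp q)
  obtain rfl := hbidet.2.1 b (t q') hb (ht q')
  exact (A.reach_det hbidet _ _ _ _ (hu q) h3).trans
    (A.reach_codet hbidet _ _ _ _ h4 (hv q'))
end

section
/- Let B be a bideterministic weighted automaton over a field F and alphabet Σ, and let u, v ∈ Σ*. If the supports of the left quotients u⁻¹‖B‖ and v⁻¹‖B‖ have a common element, then there exists a nonzero scalar c ∈ F such that u⁻¹‖B‖ = c · (v⁻¹‖B‖), i.e., the two quotients are nonzero scalar multiples of each other. -/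
namespace WeightedAutomaton

/-- A sum weighted by a family with at most one nonzero entry. -/
theorem sum_unique_support {F Q : Type} [Field F] [Fintype Q] (x : Q → F)
    (hx : ∀ p q, x p ≠ 0 → x q ≠ 0 → p = q) :
    (∀ f : Q → F, ∑ q, x q * f q = 0) ∨
      ∃ q, x q ≠ 0 ∧ ∀ f : Q → F, ∑ p, x p * f p = x q * f q := by
  by_cases h : ∃ q, x q ≠ 0
  · obtain ⟨q, hq⟩ := h
    refine Or.inr ⟨q, hq, fun f => ?_⟩
    refine Finset.sum_eq_single q (fun p _ hp => ?_) (fun h => absurd (Finset.mem_univ q) h)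
    have : x p = 0 := by
      by_contra h0
      exact hp (hx p q h0 hq)
    rw [this, zero_mul]
  · push Not at h
    exact Or.inl fun f => Finset.sum_eq_zero fun q _ => by rw [h q, zero_mul]

theorem future_inj {F : Type} [Field F] {α : Type} (B : WeightedAutomaton F α)
    (hB : B.Bideterministic) (w : List α) :
    ∀ p q, B.future w p ≠ 0 → B.future w q ≠ 0 → p = q := by
  induction w with
  | nil => exact hB.2.1
  | cons c w ih =>
    intro p q hp hq
    rw [future] at hp hq
    obtain ⟨p', -, hp'⟩ := Finset.exists_ne_zero_of_sum_ne_zero hp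
    obtain ⟨q', -, hq'⟩ := Finset.exists_ne_zero_of_sum_ne_zero hq
    have e := ih p' q' (right_ne_zero_of_mul hp') (right_ne_zero_of_mul hq')
    subst e
    exact hB.2.2.2 p q c p' (left_ne_zero_of_mul hp') (left_ne_zero_of_mul hq')

theorem future_append {F : Type} [Field F] {α : Type} (B : WeightedAutomaton F α)
    (hB : B.Bideterministic) (u : List α) :
    ∀ p, (∀ w, B.future (u ++ w) p = 0) ∨
      ∃ q a, a ≠ 0 ∧ ∀ w, B.future (u ++ w) p = a * B.future w q := by
  induction u with
  | nil => exact fun p => Or.inr ⟨p, 1, one_ne_zero, fun w => by simp⟩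
  | cons c u ih =>
    intro p
    simp only [List.cons_append, future]
    rcases sum_unique_support (B.σ p c) (hB.2.2.1 p c) with h | ⟨q, hq, h⟩
    · exact Or.inl fun w => h _
    · rcases ih q with h' | ⟨r, a, ha, h'⟩
      · exact Or.inl fun w => by rw [h, h', mul_zero]
      · exact Or.inr ⟨r, _, mul_ne_zero hq ha, fun w => by rw [h, h', mul_assoc]⟩

theorem behaviour_append {F : Type} [Field F] {α : Type} (B : WeightedAutomaton F α)
    (hB : B.Bideterministic) (u w₀ : List α) (h₀ : B.behaviour (u ++ w₀) ≠ 0) :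
    ∃ q a, a ≠ 0 ∧ ∀ w, B.behaviour (u ++ w) = a * B.future w q := by
  rcases sum_unique_support B.ι hB.1 with h | ⟨q, hq, h⟩
  · exact absurd (h _) h₀
  · rcases B.future_append hB u q with h' | ⟨r, a, ha, h'⟩
    · exact absurd (by rw [behaviour, h, h', mul_zero]) h₀
    · exact ⟨r, _, mul_ne_zero hq ha, fun w => by rw [behaviour, h, h', mul_assoc]⟩

end WeightedAutomaton

/-- If the supports of two left quotients `u⁻¹‖B‖` and `v⁻¹‖B‖` of the
behaviour of a bideterministic weighted automaton `B` over a field intersect,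
then the two quotients are nonzero scalar multiples of each other. -/
theorem leftQuotients_scalar_multiple_of_support_inter
    {F : Type} [Field F] {α : Type} [Fintype α] [Nonempty α]
    (B : WeightedAutomaton F α) (hbidet : B.Bideterministic) (u v : List α)
    (h : ∃ w : List α, B.behaviour (u ++ w) ≠ 0 ∧ B.behaviour (v ++ w) ≠ 0) :
    ∃ c : F, c ≠ 0 ∧
      ∀ w : List α, B.behaviour (u ++ w) = c * B.behaviour (v ++ w) := by
  obtain ⟨w₀, hu, hv⟩ := h
  obtain ⟨p, a, ha, hp⟩ := B.behaviour_append hbidet u w₀ hu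
  obtain ⟨q, b, hb, hq⟩ := B.behaviour_append hbidet v w₀ hv
  rw [hp] at hu
  rw [hq] at hv
  have e := B.future_inj hbidet w₀ p q (right_ne_zero_of_mul hu) (right_ne_zero_of_mul hv)
  subst e
  refine ⟨a / b, div_ne_zero ha hb, fun w => ?_⟩
  rw [hp, hq, ← mul_assoc, div_mul_cancel₀ a hb]
end

section
/- Let R₀ be the subring of the polynomial ring ℚ[x,y] generated over ℚ by all monomials x^m·y^n with m + n ≥ 2, and let Σ = {a} be a one-letter alphabet. Consider the series r : Σ* → ℚ[x,y] defined by r(aᵗ) = (x + y)^{t+2} for every t ∈ ℕ. Then: (1) r is the behaviour of a weighted automaton whose weights all lie in R₀; (2) r is the behaviour of a bideterministic weighted automaton over the field ℚ(x,y) of rational fractions; but (3) there is no bideterministic weighted automaton whose weights all lie in R₀ and whose behaviour equals r. -/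
noncomputable section

open MvPolynomial

/-- The polynomial ring `ℚ[x,y]`, with `x = X 0` and `y = X 1`. -/
abbrev PolyQ : Type := MvPolynomial (Fin 2) ℚ

/-- The subring `R₀` of `ℚ[x,y]` generated over `ℚ` by all monomials
`x^m * y^n` with `m + n ≥ 2`. -/
def R0 : Subalgebra ℚ PolyQ :=
  Algebra.adjoin ℚ {f : PolyQ | ∃ m n : ℕ, 2 ≤ m + n ∧ f = X 0 ^ m * X 1 ^ n}

/-- The series over the one-letter alphabet `Unit` sending `aᵗ` to
`(x + y)^(t+2)`. -/
def powSeries : List Unit → PolyQ := fun w => (X 0 + X 1) ^ (w.length + 2)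

/-- All weights of a weighted automaton over `ℚ[x,y]` lie in `R₀`. -/
def weightsInR0 (A : WeightedAutomaton PolyQ Unit) : Prop :=
  (∀ q c q', A.σ q c q' ∈ R0) ∧ (∀ q, A.ι q ∈ R0) ∧ (∀ q, A.τ q ∈ R0)

theorem mono_mem_R0 (m n : ℕ) (h : 2 ≤ m + n) : (X 0 ^ m * X 1 ^ n : PolyQ) ∈ R0 :=
  Algebra.subset_adjoin ⟨m, n, h, rfl⟩

theorem sq_mem_R0 : ((X 0 + X 1) ^ 2 : PolyQ) ∈ R0 := by
  have h : ((X 0 + X 1) ^ 2 : PolyQ) = X 0 ^ 2 * X 1 ^ 0 + (X 0 ^ 1 * X 1 ^ 1 + X 0 ^ 1 * X 1 ^ 1)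
      + X 0 ^ 0 * X 1 ^ 2 := by ring
  rw [h]
  exact add_mem (add_mem (mono_mem_R0 _ _ (by norm_num))
    (add_mem (mono_mem_R0 _ _ (by norm_num)) (mono_mem_R0 _ _ (by norm_num))))
    (mono_mem_R0 _ _ (by norm_num))

theorem cube_mem_R0 : ((X 0 + X 1) ^ 3 : PolyQ) ∈ R0 := by
  have h : ((X 0 + X 1) ^ 3 : PolyQ) = X 0 ^ 3 * X 1 ^ 0
      + (X 0 ^ 2 * X 1 ^ 1 + X 0 ^ 2 * X 1 ^ 1 + X 0 ^ 2 * X 1 ^ 1)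
      + (X 0 ^ 1 * X 1 ^ 2 + X 0 ^ 1 * X 1 ^ 2 + X 0 ^ 1 * X 1 ^ 2)
      + X 0 ^ 0 * X 1 ^ 3 := by ring
  rw [h]
  have h1 := mono_mem_R0 2 1 (by norm_num)
  have h2 := mono_mem_R0 1 2 (by norm_num)
  exact add_mem (add_mem (add_mem (mono_mem_R0 _ _ (by norm_num))
    (add_mem (add_mem h1 h1) h1)) (add_mem (add_mem h2 h2) h2))
    (mono_mem_R0 _ _ (by norm_num))

theorem R0_lin_coeff {f : PolyQ} (hf : f ∈ R0) :
    eval (fun _ => (0 : ℚ)) (pderiv 0 f) = 0 := by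
  have hf' : f ∈ Algebra.adjoin ℚ
    {f : PolyQ | ∃ m n : ℕ, 2 ≤ m + n ∧ f = X 0 ^ m * X 1 ^ n} := hf
  induction hf' using Algebra.adjoin_induction with
  | mem f h =>
    obtain ⟨m, n, h, rfl⟩ := h
    rw [Derivation.leibniz, Derivation.leibniz_pow, Derivation.leibniz_pow]
    have h10 : pderiv (R := ℚ) (0 : Fin 2) (X 1) = 0 := pderiv_X_of_ne (by decide)
    rw [h10, pderiv_X_self]
    rcases m with _ | _ | m
    · simp
    · have : n ≠ 0 := by omega
      simp [this]
    · simp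
  | algebraMap r =>
    simp [MvPolynomial.algebraMap_eq]
  | add f g _ _ ihf ihg => rw [map_add, map_add, ihf ‹_›, ihg ‹_›, add_zero]
  | mul f g _ _ ihf ihg =>
    rw [Derivation.leibniz, smul_eq_mul, smul_eq_mul, map_add, map_mul, map_mul, ihf ‹_›, ihg ‹_›,
      mul_zero, mul_zero, add_zero]

theorem not_mem_R0 : (X 0 + X 1 : PolyQ) ∉ R0 := by
  intro h
  have h1 := R0_lin_coeff h
  have h10 : pderiv (R := ℚ) (0 : Fin 2) (X 1) = 0 := pderiv_X_of_ne (by decide)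
  rw [map_add, h10, pderiv_X_self] at h1
  simp at h1

theorem s_ne_zero : (X 0 + X 1 : PolyQ) ≠ 0 := fun h => not_mem_R0 (h ▸ zero_mem _)

/-- Two-state automaton over `R₀`. -/
def autA : WeightedAutomaton PolyQ Unit where
  Q := Bool
  σ := fun p _ q => match p, q with
    | true, false => (X 0 + X 1) ^ 2
    | false, true => 1
    | _, _ => 0
  ι := fun p => match p with
    | true => (X 0 + X 1) ^ 2
    | false => (X 0 + X 1) ^ 3
  τ := fun p => match p with
    | true => 1
    | false => 0

theorem autA_future (w : List Unit) :
    autA.future w true + (X 0 + X 1) * autA.future w false = (X 0 + X 1) ^ w.length := by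
  induction w with
  | nil => simp [WeightedAutomaton.future, autA]
  | cons c w ih =>
    have h1 : autA.future (c :: w) true = (X 0 + X 1) ^ 2 * autA.future w false := by
      change ∑ p : Bool, autA.σ true c p * autA.future w p = _
      rw [Fintype.sum_bool]
      change 0 * _ + (X 0 + X 1) ^ 2 * _ = _
      ring
    have h2 : autA.future (c :: w) false = autA.future w true := by
      change ∑ p : Bool, autA.σ false c p * autA.future w p = _
      rw [Fintype.sum_bool]
      change 1 * _ + 0 * _ = _
      ring
    rw [h1, h2, List.length_cons, pow_succ _ w.length, ← ih]
    ring

theorem autA_behaviour : autA.behaviour = powSeries := by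
  funext w
  change ∑ p : Bool, autA.ι p * autA.future w p = (X 0 + X 1) ^ (w.length + 2)
  rw [Fintype.sum_bool]
  change (X 0 + X 1) ^ 2 * _ + (X 0 + X 1) ^ 3 * _ = _
  rw [pow_add, ← autA_future]
  ring

theorem autA_weights : weightsInR0 autA := by
  refine ⟨?_, ?_, ?_⟩
  · rintro (_ | _) c (_ | _)
    · exact zero_mem R0
    · exact one_mem R0
    · exact sq_mem_R0
    · exact zero_mem R0
  · rintro (_ | _)
    · exact cube_mem_R0
    · exact sq_mem_R0
  · rintro (_ | _)
    · exact zero_mem R0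
    · exact one_mem R0

/-- One-state automaton over the fraction field. -/
def autB : WeightedAutomaton (FractionRing PolyQ) Unit where
  Q := Unit
  σ := fun _ _ _ => algebraMap PolyQ _ (X 0 + X 1)
  ι := fun _ => algebraMap PolyQ _ ((X 0 + X 1) ^ 2)
  τ := fun _ => 1

theorem autB_future (w : List Unit) :
    autB.future w () = algebraMap PolyQ _ ((X 0 + X 1) ^ w.length) := by
  induction w with
  | nil =>
    change (1 : FractionRing PolyQ) = _
    rw [List.length_nil, pow_zero, map_one]
  | cons c w ih =>
    change ∑ p : Unit, autB.σ () c p * autB.future w p = _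
    rw [Fintype.sum_unique]
    change algebraMap PolyQ _ (X 0 + X 1) * autB.future w () = _
    rw [ih, ← map_mul, List.length_cons, pow_succ']

theorem autB_behaviour (w : List Unit) :
    autB.behaviour w = algebraMap PolyQ (FractionRing PolyQ) (powSeries w) := by
  change ∑ p : Unit, autB.ι p * autB.future w p = _
  rw [Fintype.sum_unique]
  change algebraMap PolyQ _ ((X 0 + X 1) ^ 2) * autB.future w () = _
  rw [autB_future, ← map_mul, ← pow_add, add_comm 2]
  rfl

theorem no_bidet (C : WeightedAutomaton PolyQ Unit) (hC : C.Bideterministic)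
    (hw : weightsInR0 C) (hb : C.behaviour = powSeries) : False := by
  obtain ⟨hι, hτ, -, -⟩ := hC
  have h0 : ∑ q, C.ι q * C.τ q = (X 0 + X 1) ^ 2 := congrFun hb []
  have h1 : ∑ q, C.ι q * ∑ p, C.σ q () p * C.τ p = (X 0 + X 1) ^ 3 := congrFun hb [()]
  obtain ⟨q, -, hq⟩ : ∃ q ∈ Finset.univ, C.ι q * C.τ q ≠ 0 :=
    Finset.exists_ne_zero_of_sum_ne_zero (h0 ▸ pow_ne_zero 2 s_ne_zero)
  have hιq := left_ne_zero_of_mul hq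
  have hτq := right_ne_zero_of_mul hq
  have hι' : ∀ p, p ≠ q → C.ι p = 0 := fun p hp => by
    by_contra h
    exact hp (hι p q h hιq)
  have hτ' : ∀ p, p ≠ q → C.τ p = 0 := fun p hp => by
    by_contra h
    exact hp (hτ p q h hτq)
  rw [Fintype.sum_eq_single q (fun p hp => by rw [hι' p hp, zero_mul])] at h0 h1
  rw [Fintype.sum_eq_single q (fun p hp => by rw [hτ' p hp, mul_zero])] at h1
  have h2 : (X 0 + X 1 : PolyQ) ^ 2 * C.σ q () q = (X 0 + X 1) ^ 2 * (X 0 + X 1) := by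
    rw [← pow_succ, ← h1, ← h0]
    ring
  have h3 := mul_left_cancel₀ (pow_ne_zero 2 s_ne_zero) h2
  exact not_mem_R0 (h3 ▸ hw.1 q () q)

/-- The series `t ↦ (x+y)^(t+2)` over the one-letter alphabet is the behaviour
of a weighted automaton with all weights in `R₀`, and it is the behaviour of a
bideterministic weighted automaton over the field `ℚ(x,y)` of rational
fractions, yet it is not the behaviour of any bideterministic weighted
automaton with all weights in `R₀`. -/
theorem powSeries_behaviour_R0_bideterminisable_over_fractionField_not_over_R0 :
    (∃ A : WeightedAutomaton PolyQ Unit,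
        weightsInR0 A ∧ A.behaviour = powSeries) ∧
    (∃ B : WeightedAutomaton (FractionRing PolyQ) Unit,
        B.Bideterministic ∧
        ∀ w : List Unit,
          B.behaviour w = algebraMap PolyQ (FractionRing PolyQ) (powSeries w)) ∧
    ¬ (∃ C : WeightedAutomaton PolyQ Unit,
        C.Bideterministic ∧ weightsInR0 C ∧ C.behaviour = powSeries) := by
  refine ⟨⟨autA, autA_weights, autA_behaviour⟩, ⟨autB, ?_, autB_behaviour⟩, ?_⟩
  · exact ⟨fun _ _ _ _ => rfl, fun _ _ _ _ => rfl, fun _ _ _ _ _ _ => rfl, fun _ _ _ _ _ _ => rfl⟩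
  · rintro ⟨C, hC, hw, hb⟩
    exact no_bidet C hC hw hb

end
end
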